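/- Fix integers p, k ≥ 1. Suppose: f₀ : ℝ^p → ℝ^p is a locally Lipschitz bijection with f₀(0) = 0, whose inverse f₀⁻¹ is locally Lipschitz and such that f₀ is differentiable with det Df₀(z) ≠ 0 at Lebesgue-almost every z ∈ ℝ^p; f̄₁ : ℝ^{kp} → ℝ^p is locally Lipschitz, surjective, and differentiable with rank Df̄₁(z̄) = p at almost every z̄ ∈ ℝ^{kp}; ρ is an admissible density on ℝ^p satisfying the local-maximum condition. Let f̃₀ : ℝ^p → ℝ^p be any locally Lipschitz bijection with f̃₀(0) = 0 and det Df̃₀(z) ≠ 0 at almost every z, and let f̃₁ : ℝ^{kp} → ℝ^p be any locally Lipschitz function. Then there exists an admissible density ρ̃ on ℝ^p such that ρ(f₀(ξ) − f̄₁(ξ̄))·|det Df₀(ξ)| = ρ̃(f̃₀(ξ) − f̃₁(ξ̄))·|det Df̃₀(ξ)| for Lebesgue-almost every (ξ, ξ̄) ∈ ℝ^p × ℝ^{kp}, if and only if there exists an orthogonal matrix Q ∈ O(p) such that f̃₀(z) = Q f₀(z) for all z ∈ ℝ^p and f̃₁(z̄) = Q f̄₁(z̄) for all z̄ ∈ ℝ^{kp}.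 -/

import Mathlib

open MeasureTheory Matrix

noncomputable section

/-- `E n` is Euclidean space `ℝ^n`. -/
abbrev E (n : ℕ) : Type := EuclideanSpace ℝ (Fin n)

/-- Action of a matrix on a Euclidean vector. -/
def mulVecE {m n : ℕ} (A : Matrix (Fin m) (Fin n) ℝ) (x : E n) : E m := WithLp.toLp 2 (A.mulVec x)

/-- An admissible density on `ℝ^G`: continuously differentiable, everywhere strictly positive,
integrating to one, with zero mean and identity covariance (stated componentwise). -/
def AdmissibleDensity {G : ℕ} (ρ : E G → ℝ) : Prop :=
  ContDiff ℝ 1 ρ ∧ (∀ u, 0 < ρ u) ∧ ((∫ u, ρ u) = 1) ∧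
    (∀ i, (∫ u : E G, u i * ρ u) = 0) ∧
    (∀ i j, (∫ u : E G, u i * u j * ρ u) = if i = j then 1 else 0)

/-- The local-maximum condition: `ρ` has a local maximum at some `u₀`, is twice continuously
differentiable in a neighbourhood of `u₀`, and has negative definite Hessian there. -/
def LocalMaxCondition {G : ℕ} (ρ : E G → ℝ) : Prop :=
  ∃ u₀ : E G, IsLocalMax ρ u₀ ∧ ContDiffAt ℝ 2 ρ u₀ ∧
    ∀ v : E G, v ≠ 0 → iteratedFDeriv ℝ 2 ρ u₀ ![v, v] < 0

/-!
Almost everywhere the likelihood ratio `ρ̃(f̃₀ z - f̃₁ x) / ρ(f₀ z - f₁ x)` is a ratio of Jacobians,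
so by continuity it is everywhere a function of `z` alone. In the coordinates `y = f₀ z` and
`w = f₁ x` this reads `ρ(y - w) m(y) = ρ̃(g y - h w)`.

A nonzero integrable function has no period, and its translates along an unbounded sequence do not
converge to another translate; hence translates depend on the shift injectively, properly and, by
the inverse function theorem, immersively. Since `w ↦ ρ̃(z - h w)` is `C¹` for every `z`, so is `h`,
and it is a local diffeomorphism. Differentiating in `w` shows that `y - w` is critical for `ρ` iff
`g y - h w` is critical for `ρ̃`. A nondegenerate maximum `u₀` of `ρ` is an isolated critical point,
which forces `g y = h (y - u₀) + c`. The chain rule now identifies the Hessian of `ρ` at `u₀`,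
pulled back by `Dh(w)⁻¹`, with a form independent of `w`. So every `Dh(w)` is an isometry between
two fixed Euclidean norms, and `h` is affine by the theorem of Mazur and Ulam. Finally, equality of
the first two moments of `ρ` and `ρ̃` makes `h` linear and orthogonal.
-/

open Filter Topology Bornology

section Translate

variable {V F ι X : Type*} [NormedAddCommGroup V] [MeasurableSpace V] [BorelSpace V] {μ : Measure V}
  [μ.IsAddRightInvariant] [μ.IsOpenPosMeasure] [NormedAddCommGroup F] {f : V → F}

-- Fatou's lemma on a ball where `z ↦ f (z - a)` does not vanish: the translated ball leaves every
-- bounded set, so it carries asymptotically no mass of `f`.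
theorem not_tendsto_cobounded_of_tendsto_translate (hf : Continuous f) (hfi : Integrable f μ)
    (hf0 : f ≠ 0) {l : Filter ι} [l.NeBot] [l.IsCountablyGenerated] {a : V} {b : ι → V}
    (h : ∀ z, Tendsto (fun i => f (z - b i)) l (𝓝 (f (z - a)))) :
    ¬ Tendsto b l (cobounded V) := by
  intro hb
  obtain ⟨u, hu⟩ := Function.ne_iff.1 hf0
  set K : Set V := Metric.ball (u + a) 1
  have hKm (i : ι) : MeasurableSet ((· + b i) ⁻¹' K) :=
    measurable_add_const (b i) Metric.isOpen_ball.measurableSet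
  have hmass (i : ι) :
      ∫⁻ z in K, ‖f (z - b i)‖ₑ ∂μ = ∫⁻ v, ((· + b i) ⁻¹' K).indicator (‖f ·‖ₑ) v ∂μ := by
    have hb := (measurePreserving_add_right μ (b i)).setLIntegral_comp_preimage_emb
      (measurableEmbedding_addRight (b i)) (fun z => ‖f (z - b i)‖ₑ) K
    rw [lintegral_indicator (hKm i), ← hb]
    simp only [add_sub_cancel_right]
  have hescape (v : V) : ∀ᶠ i in l, ((· + b i) ⁻¹' K).indicator (‖f ·‖ₑ) v = 0 := by
    have hvb : Tendsto (v + b ·) l (cobounded V) := (tendsto_const_add_cobounded v).comp hb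
    filter_upwards [hvb.eventually (isBounded_def.1 Metric.isBounded_ball)] with i hi
    exact Set.indicator_of_notMem (s := (· + b i) ⁻¹' K) hi _
  have hlim : Tendsto (fun i => ∫⁻ z in K, ‖f (z - b i)‖ₑ ∂μ) l (𝓝 0) := by
    simp only [hmass]
    rw [← lintegral_zero (μ := μ)]
    exact tendsto_lintegral_filter_of_dominated_convergence (‖f ·‖ₑ)
      (.of_forall fun i => hf.enorm.measurable.indicator (hKm i))
      (.of_forall fun i => .of_forall fun v => Set.indicator_le_self _ _ _) hfi.2.ne
      (.of_forall fun v => tendsto_const_nhds.congr' ((hescape v).mono fun _ h => h.symm))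
  have hfatou : ∫⁻ z in K, ‖f (z - a)‖ₑ ∂μ ≤ 0 :=
    calc ∫⁻ z in K, ‖f (z - a)‖ₑ ∂μ
        = ∫⁻ z in K, l.liminf (fun i => ‖f (z - b i)‖ₑ) ∂μ :=
          lintegral_congr fun z => (h z).enorm.liminf_eq.symm
      _ ≤ l.liminf fun i => ∫⁻ z in K, ‖f (z - b i)‖ₑ ∂μ :=
          lintegral_liminf_le' fun i => (Continuous.measurable (by fun_prop)).aemeasurable
      _ = 0 := hlim.liminf_eq
  have hc : Continuous fun z => ‖f (z - a)‖ₑ := by fun_prop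
  refine hfatou.not_gt ((setLIntegral_pos_iff hc.measurable).2 ?_)
  exact (hc.isOpen_support.inter Metric.isOpen_ball).measure_pos μ
    ⟨u + a, by simpa using hu, Metric.mem_ball_self one_pos⟩

theorem eq_zero_of_periodic_of_integrable [NormedSpace ℝ V] (hf : Continuous f)
    (hfi : Integrable f μ) (hf0 : f ≠ 0) {e : V} (he : Function.Periodic f e) : e = 0 := by
  by_contra hne
  refine not_tendsto_cobounded_of_tendsto_translate (l := atTop) (a := 0) (b := fun n : ℕ => n • e)
    hf hfi hf0 (fun z => by simp [he.sub_nsmul_eq]) ?_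
  rw [← tendsto_norm_atTop_iff_cobounded]
  simp only [← Nat.cast_smul_eq_nsmul ℝ, norm_smul, RCLike.norm_natCast]
  exact tendsto_natCast_atTop_atTop.atTop_mul_const (norm_pos_iff.2 hne)

theorem eq_of_forall_translate_eq [NormedSpace ℝ V] (hf : Continuous f)
    (hfi : Integrable f μ) (hf0 : f ≠ 0) {a b : V} (h : ∀ z, f (z - a) = f (z - b)) : a = b := by
  refine (sub_eq_zero.1 (eq_zero_of_periodic_of_integrable hf hfi hf0 fun z => ?_)).symm
  simpa [add_sub_right_comm, ← add_sub_assoc] using h (z + b)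

theorem tendsto_of_tendsto_translate [NormedSpace ℝ V] [ProperSpace V] (hf : Continuous f)
    (hfi : Integrable f μ) (hf0 : f ≠ 0) {l : Filter ι} [l.IsCountablyGenerated] {a : V} {b : ι → V}
    (h : ∀ z, Tendsto (fun i => f (z - b i)) l (𝓝 (f (z - a)))) : Tendsto b l (𝓝 a) := by
  refine tendsto_of_subseq_tendsto fun s hs => ?_
  have hbs (z : V) : Tendsto (fun n => f (z - b (s n))) atTop (𝓝 (f (z - a))) := (h z).comp hs
  have hbdd : ∃ R, ∃ᶠ n in atTop, b (s n) ∈ Metric.closedBall (0 : V) R := by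
    by_contra! hcon
    refine not_tendsto_cobounded_of_tendsto_translate hf hfi hf0 hbs ?_
    simpa [(Metric.hasBasis_cobounded_compl_closedBall (0 : V)).tendsto_right_iff] using hcon
  obtain ⟨R, hR⟩ := hbdd
  obtain ⟨c, -, t, ht, hc⟩ := tendsto_subseq_of_frequently_bounded Metric.isBounded_closedBall hR
  have hca : c = a := eq_of_forall_translate_eq hf hfi hf0 fun z =>
    tendsto_nhds_unique ((hf.tendsto _).comp (hc.const_sub z)) ((hbs z).comp ht.tendsto_atTop)
  exact ⟨t, hca ▸ hc⟩

theorem continuous_of_continuous_translate [NormedSpace ℝ V] [ProperSpace V] [TopologicalSpace X]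
    [FirstCountableTopology X] (hf : Continuous f) (hfi : Integrable f μ) (hf0 : f ≠ 0)
    {h : X → V} (hfh : ∀ z, Continuous fun x => f (z - h x)) : Continuous h :=
  continuous_iff_continuousAt.2 fun x =>
    tendsto_of_tendsto_translate hf hfi hf0 fun z => (hfh z).tendsto x

end Translate

section Smoothness

section

variable {D V G : Type*} [NormedAddCommGroup D] [NormedSpace ℝ D] [NormedAddCommGroup V]
  [NormedSpace ℝ V] [FiniteDimensional ℝ V] [NormedAddCommGroup G] [NormedSpace ℝ G]
  [FiniteDimensional ℝ G] {n : WithTop ℕ∞}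

-- A linear left inverse `A` of the derivative of `P` reduces to the inverse function theorem
-- for `A ∘ P`, whose derivative is the identity.
theorem contDiffAt_of_contDiffAt_comp {P : V → G} {h : D → V} {x : D} (hn : n ≠ 0)
    (hP : ContDiffAt ℝ n P (h x)) (hinj : Function.Injective (fderiv ℝ P (h x)))
    (hh : ContinuousAt h x) (hPh : ContDiffAt ℝ n (P ∘ h) x) : ContDiffAt ℝ n h x := by
  have := FiniteDimensional.complete ℝ V
  obtain ⟨A, hA⟩ := (fderiv ℝ P (h x)).toLinearMap.exists_leftInverse_of_injective
    (LinearMap.ker_eq_bot.2 hinj)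
  let Q : V → V := A.toContinuousLinearMap ∘ P
  have hQn : ContDiffAt ℝ n Q (h x) := A.toContinuousLinearMap.contDiff.contDiffAt.comp _ hP
  have hQ' : HasFDerivAt Q (ContinuousLinearEquiv.refl ℝ V : V →L[ℝ] V) (h x) := by
    refine (A.toContinuousLinearMap.hasFDerivAt.comp _
      (hP.differentiableAt hn).hasFDerivAt).congr_fderiv ?_
    ext v
    exact LinearMap.congr_fun hA v
  have hleft : ∀ᶠ y in 𝓝 (h x), hQn.localInverse hQ' hn (Q y) = y :=
    (hQn.hasStrictFDerivAt' hQ' hn).eventually_left_inverse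
  have hQh : ContDiffAt ℝ n (Q ∘ h) x := A.toContinuousLinearMap.contDiff.contDiffAt.comp x hPh
  exact ((hQn.to_localInverse hQ' hn).comp x hQh).congr_of_eventuallyEq
    ((hh.eventually hleft).mono fun _ hy => hy.symm)

end

variable {D V F : Type*} [NormedAddCommGroup D] [NormedSpace ℝ D] [NormedAddCommGroup V]
  [NormedSpace ℝ V] [MeasurableSpace V] [BorelSpace V] {μ : Measure V} [μ.IsAddRightInvariant]
  [μ.IsOpenPosMeasure] [NormedAddCommGroup F] [NormedSpace ℝ F] {f : V → F} {n : WithTop ℕ∞}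

theorem eq_zero_of_forall_fderiv_apply_eq_zero (hf : Differentiable ℝ f) (hfi : Integrable f μ)
    (hf0 : f ≠ 0) {v : V} (hv : ∀ c, fderiv ℝ f c v = 0) : v = 0 := by
  refine eq_zero_of_periodic_of_integrable hf.continuous hfi hf0 fun u => ?_
  have hline (t : ℝ) : HasDerivAt (fun t : ℝ => f (u + t • v)) 0 t := by
    rw [← hv (u + t • v)]
    exact (hf _).hasFDerivAt.comp_hasDerivAt t
      (by simpa using ((hasDerivAt_id t).smul_const v).const_add u)
  simpa using is_const_of_deriv_eq_zero (fun t => (hline t).differentiableAt)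
    (fun t => (hline t).deriv) 1 0

variable [FiniteDimensional ℝ V]

theorem exists_finset_forall_fderiv_apply_eq_zero (hf : Differentiable ℝ f) (hfi : Integrable f μ)
    (hf0 : f ≠ 0) : ∃ T : Finset V, ∀ v, (∀ c ∈ T, fderiv ℝ f c v = 0) → v = 0 := by
  obtain ⟨T, hT⟩ := Finset.exists_inf_le fun c => (fderiv ℝ f c).ker
  refine ⟨T, fun v hv => eq_zero_of_forall_fderiv_apply_eq_zero hf hfi hf0 fun c => ?_⟩
  exact hT c (Submodule.mem_finsetInf.2 hv)

theorem contDiff_of_contDiff_translate [FiniteDimensional ℝ F] (hn : n ≠ 0) (hf : ContDiff ℝ n f)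
    (hfi : Integrable f μ) (hf0 : f ≠ 0) {h : D → V}
    (hfh : ∀ z, ContDiff ℝ n fun x => f (z - h x)) : ContDiff ℝ n h := by
  have := FiniteDimensional.proper_real V
  have hfd := hf.differentiable hn
  have hh := continuous_of_continuous_translate hf.continuous hfi hf0 fun z => (hfh z).continuous
  obtain ⟨T, hT⟩ := exists_finset_forall_fderiv_apply_eq_zero hfd hfi hf0
  refine contDiff_iff_contDiffAt.2 fun x => ?_
  let P : V → T → F := fun a c => f (c + h x - a)
  have hP : ContDiff ℝ n P := contDiff_pi.2 fun c => hf.comp (contDiff_const.sub contDiff_id)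
  have hP' : HasFDerivAt P (.pi fun c : T => -fderiv ℝ f c) (h x) := by
    refine hasFDerivAt_pi.2 fun c => ?_
    have hc : HasFDerivAt f (fderiv ℝ f c) (c + h x - h x) := by
      rw [add_sub_cancel_right]; exact (hfd c).hasFDerivAt
    exact (hc.comp (h x) ((hasFDerivAt_id _).const_sub _)).congr_fderiv (by ext; simp)
  refine contDiffAt_of_contDiffAt_comp hn hP.contDiffAt ?_ hh.continuousAt
    (contDiff_pi.2 fun c : T => hfh (c + h x)).contDiffAt
  rw [hP'.fderiv, injective_iff_map_eq_zero]
  exact fun v hv => hT v fun c hc => by simpa using congrFun hv ⟨c, hc⟩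

end Smoothness

section Isometry

theorem exists_linearEquiv_norm_sq_eq {V : Type*} [AddCommGroup V] [Module ℝ V]
    [FiniteDimensional ℝ V] (B : LinearMap.BilinForm ℝ V) (hsymm : ∀ v w, B v w = B w v)
    (hpos : ∀ v, v ≠ 0 → 0 < B v v) :
    ∃ S : V ≃ₗ[ℝ] EuclideanSpace ℝ (Fin (Module.finrank ℝ V)), ∀ v, ‖S v‖ ^ 2 = B v v := by
  let core : InnerProductSpace.Core ℝ V :=
    { inner := fun v w => B v w
      conj_inner_symm := fun v w => hsymm w v
      re_inner_nonneg := fun v => by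
        obtain rfl | hv := eq_or_ne v 0
        · simp
        · exact (hpos v hv).le
      add_left := by simp
      smul_left := by simp
      definite := fun v hv => by_contra fun hne => (hpos v hne).ne' hv }
  let _ : NormedAddCommGroup V := core.toNormedAddCommGroup
  let _ : InnerProductSpace ℝ V := .ofCore core.toCore
  let S := (stdOrthonormalBasis ℝ V).repr
  refine ⟨S.toLinearEquiv, fun v => ?_⟩
  calc ‖S v‖ ^ 2 = inner ℝ v v := by rw [S.norm_map, real_inner_self_eq_norm_sq]
    _ = B v v := rfl

variable {V W : Type*} [NormedAddCommGroup V] [NormedSpace ℝ V] [NormedAddCommGroup W]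
  [NormedSpace ℝ W]

theorem hasFDerivAt_homeomorph_symm {e : V ≃ₜ W} {A : V → V ≃L[ℝ] W}
    (he : ∀ x, HasFDerivAt e (A x : V →L[ℝ] W) x) (z : W) :
    HasFDerivAt e.symm ((A (e.symm z)).symm : W →L[ℝ] V) z :=
  e.toOpenPartialHomeomorph.hasFDerivAt_symm (Set.mem_univ z) (he (e.symm z))

theorem isometry_of_hasFDerivAt_linearIsometryEquiv (e : V ≃ₜ W) (A : V → V ≃ₗᵢ[ℝ] W)
    (he : ∀ x, HasFDerivAt e (A x : V →L[ℝ] W) x) : Isometry e := by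
  have he' : ∀ z, HasFDerivAt e.symm ((A (e.symm z)).symm : W →L[ℝ] V) z :=
    hasFDerivAt_homeomorph_symm (A := fun x => (A x).toContinuousLinearEquiv) he
  have hlip : LipschitzWith 1 e := lipschitzWith_of_nnnorm_fderiv_le (𝕜 := ℝ)
    (fun x => (he x).differentiableAt)
    fun x => by rw [(he x).fderiv]; exact (A x).toLinearIsometry.norm_toContinuousLinearMap_le
  have hlip' : LipschitzWith 1 e.symm := lipschitzWith_of_nnnorm_fderiv_le (𝕜 := ℝ)
    (fun z => (he' z).differentiableAt)
    fun z => by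
      rw [(he' z).fderiv]; exact (A _).symm.toLinearIsometry.norm_toContinuousLinearMap_le
  refine Isometry.of_dist_eq fun x y => le_antisymm ?_ ?_
  · simpa using hlip.dist_le_mul x y
  · simpa using hlip'.dist_le_mul (e x) (e y)

-- Mazur–Ulam, applied to `e` read in the norms `‖S ·‖` and `‖M ·‖`.
theorem exists_linear_of_norm_hasFDerivAt_eq {V' : Type*} [NormedAddCommGroup V']
    [NormedSpace ℝ V'] (e : V ≃ₜ W) (A : V → V ≃L[ℝ] W)
    (he : ∀ x, HasFDerivAt e (A x : V →L[ℝ] W) x) (S : V ≃L[ℝ] V') (M : W ≃L[ℝ] V')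
    (hSM : ∀ x v, ‖M (A x v)‖ = ‖S v‖) : ∃ L : V ≃L[ℝ] W, ∀ x, e x = L x + e 0 := by
  let e' : V' ≃ₜ V' := (S.symm.toHomeomorph.trans e).trans M.toHomeomorph
  let U (z : V') : V' ≃ₗᵢ[ℝ] V' :=
    { ((S.symm.trans (A (S.symm z))).trans M).toLinearEquiv with
      norm_map' := fun v => by simpa using hSM (S.symm z) (S.symm v) }
  have he' (z : V') : HasFDerivAt e' (U z : V' →L[ℝ] V') z :=
    M.hasFDerivAt.comp z ((he (S.symm z)).comp z S.symm.hasFDerivAt)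
  let I : V' ≃ᵢ V' := ⟨e'.toEquiv, isometry_of_hasFDerivAt_linearIsometryEquiv e' U he'⟩
  let T := I.toRealAffineIsometryEquiv
  have hT (z : V') : e' z = T.linearIsometryEquiv z + e' 0 := by
    simpa [T, I] using T.map_vadd 0 z
  refine ⟨(S.trans T.linearIsometryEquiv.toContinuousLinearEquiv).trans M.symm, fun x => ?_⟩
  have hx : M (e x) = T.linearIsometryEquiv (S x) + M (e 0) := by simpa [e'] using hT (S x)
  apply M.injective
  simpa using hx

end Isometry

section Bilinear

open Asymptotics

-- Unlike in the product rule, `C` only has to be continuous since `A` vanishes at `x`.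
theorem hasFDerivAt_bilinear_of_left_eq_zero {D X Y Z : Type*} [NormedAddCommGroup D]
    [NormedSpace ℝ D] [NormedAddCommGroup X] [NormedSpace ℝ X] [NormedAddCommGroup Y]
    [NormedSpace ℝ Y] [NormedAddCommGroup Z] [NormedSpace ℝ Z] (b : X →L[ℝ] Y →L[ℝ] Z)
    {A : D → X} {A' : D →L[ℝ] X} {C : D → Y} {x : D} (hA : HasFDerivAt A A' x) (hx : A x = 0)
    (hC : ContinuousAt C x) :
    HasFDerivAt (fun y => b (A y) (C y)) ((b.flip (C x)).comp A') x := by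
  have hmain : HasFDerivAt (fun y => b (A y) (C x)) ((b.flip (C x)).comp A') x :=
    (b.flip (C x)).hasFDerivAt.comp x hA
  have hAO : A =O[𝓝 x] fun y => y - x := by simpa [hx] using hA.isBigO_sub
  have hCo : (fun y => C y - C x) =o[𝓝 x] fun _ => (1 : ℝ) :=
    (isLittleO_one_iff ℝ).2 (by simpa using hC.sub_const (C x))
  have hrem : HasFDerivAt (fun y => b (A y) (C y - C x)) (0 : D →L[ℝ] Z) x := by
    refine .of_isLittleO ?_
    have hprod : (fun y => b (A y) (C y - C x)) =O[𝓝 x] fun y => ‖A y‖ * ‖C y - C x‖ :=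
      .of_bound ‖b‖ (.of_forall fun y => by
        simpa only [norm_mul, norm_norm, mul_assoc] using b.le_opNorm₂ _ _)
    simpa [hx] using hprod.trans_isLittleO (hAO.norm_norm.mul_isLittleO hCo.norm_left)
  simpa using hmain.fun_add hrem

end Bilinear

theorem eventually_fderiv_ne_zero {V : Type*} [NormedAddCommGroup V] [NormedSpace ℝ V]
    [FiniteDimensional ℝ V] {f : V → ℝ} {u₀ : V} (hf : DifferentiableAt ℝ (fderiv ℝ f) u₀)
    (hneg : ∀ v, v ≠ 0 → fderiv ℝ (fderiv ℝ f) u₀ v v < 0) :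
    ∀ᶠ u in 𝓝[≠] u₀, fderiv ℝ f u ≠ 0 := by
  refine hf.hasFDerivAt.eventually_ne ?_
  have hker : (fderiv ℝ (fderiv ℝ f) u₀).toLinearMap.ker = ⊥ :=
    LinearMap.ker_eq_bot'.2 fun v hv => by_contra fun hne =>
      (hneg v hne).ne congr($hv v)
  obtain ⟨K, -, hK⟩ := LinearMap.exists_antilipschitzWith _ hker
  exact ⟨K, hK⟩

/-- Observational equivalence of two location models on `V`: the density `f`, translated by `w`,
and the density `ft`, translated by `h w` and read through the transform `g`, agree up to a factor
`m` (the ratio of Jacobians) that does not depend on `w`. -/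
structure LikelihoodIdentity {V : Type*} [NormedAddCommGroup V] [NormedSpace ℝ V]
    [MeasurableSpace V] (μ : Measure V) (f ft m : V → ℝ) (g h : V → V) : Prop where
  contDiff : ContDiff ℝ 1 f
  contDiff' : ContDiff ℝ 1 ft
  integrable : Integrable f μ
  integrable' : Integrable ft μ
  pos : ∀ u, 0 < f u
  pos' : ∀ u, 0 < ft u
  continuous_left : Continuous g
  surjective_left : Function.Surjective g
  apply_sub_mul : ∀ y w, f (y - w) * m y = ft (g y - h w)

namespace LikelihoodIdentity

variable {V : Type*} [NormedAddCommGroup V] [NormedSpace ℝ V] [MeasurableSpace V]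
  {μ : Measure V} {f ft m : V → ℝ} {g h : V → V}

theorem ne_zero (H : LikelihoodIdentity μ f ft m g h) : f ≠ 0 :=
  fun h0 => (H.pos 0).ne' (congrFun h0 0)

theorem ne_zero' (H : LikelihoodIdentity μ f ft m g h) : ft ≠ 0 :=
  fun h0 => (H.pos' 0).ne' (congrFun h0 0)

theorem scale_pos (H : LikelihoodIdentity μ f ft m g h) (y : V) : 0 < m y :=
  (pos_iff_pos_of_mul_pos ((H.pos' _).trans_eq (H.apply_sub_mul y 0).symm)).1 (H.pos _)

variable [BorelSpace V] [μ.IsAddRightInvariant] [μ.IsOpenPosMeasure]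

theorem injective_right (H : LikelihoodIdentity μ f ft m g h) : Function.Injective h :=
  fun a b hab => eq_of_forall_translate_eq H.contDiff.continuous H.integrable H.ne_zero
    fun y => mul_right_cancel₀ (H.scale_pos y).ne' (by simp only [H.apply_sub_mul, hab])

variable [FiniteDimensional ℝ V]

theorem contDiff_right (H : LikelihoodIdentity μ f ft m g h) : ContDiff ℝ 1 h := by
  refine contDiff_of_contDiff_translate one_ne_zero H.contDiff' H.integrable' H.ne_zero' fun z => ?_
  obtain ⟨y, rfl⟩ := H.surjective_left z
  simp only [← H.apply_sub_mul]
  exact (H.contDiff.comp (contDiff_const.sub contDiff_id)).mul contDiff_const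

theorem smul_fderiv (H : LikelihoodIdentity μ f ft m g h) (y w : V) :
    m y • fderiv ℝ f (y - w) = (fderiv ℝ ft (g y - h w)).comp (fderiv ℝ h w) := by
  have hf := ((H.contDiff.differentiable one_ne_zero (y - w)).hasFDerivAt.comp w
    ((hasFDerivAt_id w).const_sub y)).mul_const (m y)
  have hft := (H.contDiff'.differentiable one_ne_zero (g y - h w)).hasFDerivAt.comp w
    ((H.contDiff_right.differentiable one_ne_zero w).hasFDerivAt.const_sub (g y))
  have heq : (fun w => (f ∘ fun w => y - w) w * m y) = ft ∘ fun w => g y - h w :=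
    funext (H.apply_sub_mul y)
  have := (heq ▸ hf).unique hft
  simpa using this

theorem exists_hasFDerivAt_equiv (H : LikelihoodIdentity μ f ft m g h) (w : V) :
    ∃ A : V ≃L[ℝ] V, HasFDerivAt h (A : V →L[ℝ] V) w := by
  have hinj : Function.Injective (fderiv ℝ h w).toLinearMap := by
    refine (injective_iff_map_eq_zero _).2 fun v hv => eq_zero_of_forall_fderiv_apply_eq_zero
      (H.contDiff.differentiable one_ne_zero) H.integrable H.ne_zero fun c => ?_
    have hv' : fderiv ℝ h w v = 0 := hv
    simpa [hv', (H.scale_pos _).ne'] using congr($(H.smul_fderiv (c + w) w) v)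
  exact ⟨(LinearEquiv.ofInjectiveEndo _ hinj).toContinuousLinearEquiv,
    (H.contDiff_right.differentiable one_ne_zero w).hasFDerivAt⟩

theorem fderiv_eq_zero_iff (H : LikelihoodIdentity μ f ft m g h) (y w : V) :
    fderiv ℝ ft (g y - h w) = 0 ↔ fderiv ℝ f (y - w) = 0 := by
  obtain ⟨A, hA⟩ := H.exists_hasFDerivAt_equiv w
  have hfd := H.smul_fderiv y w
  rw [hA.fderiv] at hfd
  constructor <;> intro h0
  · simpa [h0, (H.scale_pos y).ne'] using hfd
  · ext v
    simpa [h0] using congr($hfd.symm (A.symm v))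

theorem map_nhds_right (H : LikelihoodIdentity μ f ft m g h) (w : V) :
    (𝓝 w).map h = 𝓝 (h w) := by
  have := FiniteDimensional.complete ℝ V
  obtain ⟨A, hA⟩ := H.exists_hasFDerivAt_equiv w
  exact (H.contDiff_right.contDiffAt.hasStrictFDerivAt' hA one_ne_zero).map_nhds_eq_of_equiv

-- As `u₀` is an isolated critical point of `f`, no `a ≠ h (y - u₀)` close to `h (y - u₀)` makes
-- `g y - a` critical for `ft`; but `c y'` is critical for all `y'`, so take `a = g y - c y'`.
theorem exists_left_eq_right_add (H : LikelihoodIdentity μ f ft m g h) {u₀ : V}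
    (hu₀ : fderiv ℝ f u₀ = 0) (hiso : ∀ᶠ u in 𝓝[≠] u₀, fderiv ℝ f u ≠ 0) :
    ∃ c, ∀ y, g y = h (y - u₀) + c := by
  let c : V → V := fun y => g y - h (y - u₀)
  have hc : Continuous c := H.continuous_left.sub (H.contDiff_right.continuous.comp (by fun_prop))
  have hcrit (y : V) : fderiv ℝ ft (c y) = 0 := (H.fderiv_eq_zero_iff _ _).2 (by simpa using hu₀)
  have hisolated (y : V) : ∀ᶠ a in 𝓝 (h (y - u₀)), fderiv ℝ ft (g y - a) = 0 → a = h (y - u₀) := by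
    have hT : Tendsto (y - ·) (𝓝 (y - u₀)) (𝓝 u₀) := by
      simpa using (continuous_sub_left y).tendsto (y - u₀)
    rw [← H.map_nhds_right, eventually_map]
    filter_upwards [hT.eventually (eventually_nhdsWithin_iff.1 hiso)] with w hw h0
    have hwu : y - w = u₀ := by_contra fun hne => hw hne ((H.fderiv_eq_zero_iff y w).1 h0)
    rw [← hwu, sub_sub_cancel]
  have hloc : IsLocallyConstant c := by
    refine (IsLocallyConstant.iff_eventually_eq c).2 fun y => ?_
    have hT : Tendsto (fun y' => g y - c y') (𝓝 y) (𝓝 (h (y - u₀))) := by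
      have hgc : Continuous fun y' => g y - c y' := by fun_prop
      simpa [c] using hgc.tendsto y
    filter_upwards [hT.eventually (hisolated y)] with y' hy'
    rw [← sub_sub_cancel (g y) (c y'), hy' (by rw [sub_sub_cancel, hcrit])]
  refine ⟨c 0, fun y => ?_⟩
  rw [← hloc.apply_eq_of_preconnectedSpace y 0, add_sub_cancel]

theorem exists_homeomorph_eq_right (H : LikelihoodIdentity μ f ft m g h) {u₀ c : V}
    (hg : ∀ y, g y = h (y - u₀) + c) : ∃ e : V ≃ₜ V, ⇑e = h := by
  have hsurj : Function.Surjective h := fun z => by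
    obtain ⟨y, hy⟩ := H.surjective_left (z + c)
    exact ⟨y - u₀, add_right_cancel ((hg y).symm.trans hy)⟩
  exact ⟨(Equiv.ofBijective h ⟨H.injective_right, hsurj⟩).toHomeomorphOfContinuousOpen
    H.contDiff_right.continuous (isOpenMap_iff_nhds_le.2 fun w => (H.map_nhds_right w).ge), rfl⟩

-- Moving `w` so that `g y - h w` stays equal to `u` expresses `fderiv ft u` through `fderiv f`.
theorem fderiv_eq_smul_comp {e : V ≃ₜ V} (H : LikelihoodIdentity μ f ft m g e) (y u : V) :
    fderiv ℝ ft u =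
      m y • (fderiv ℝ f (y - e.symm (g y - u))).comp (fderiv ℝ e.symm (g y - u)) := by
  choose A hA using H.exists_hasFDerivAt_equiv
  have hfd := H.smul_fderiv y (e.symm (g y - u))
  rw [e.apply_symm_apply, sub_sub_cancel, (hA _).fderiv] at hfd
  rw [(hasFDerivAt_homeomorph_symm hA (g y - u)).fderiv, ← ContinuousLinearMap.smul_comp, hfd]
  ext v
  simp

theorem hasFDerivAt_fderiv {e : V ≃ₜ V} (H : LikelihoodIdentity μ f ft m g e) {u₀ c : V}
    (hg : ∀ y, g y = e (y - u₀) + c) (hu₀ : fderiv ℝ f u₀ = 0)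
    (hf2 : DifferentiableAt ℝ (fderiv ℝ f) u₀) {A : V → V ≃L[ℝ] V}
    (he : ∀ w, HasFDerivAt e (A w : V →L[ℝ] V) w) (y : V) :
    HasFDerivAt (fderiv ℝ ft)
      (m y • ((ContinuousLinearMap.compL ℝ V V ℝ).flip (A (y - u₀)).symm).comp
        ((fderiv ℝ (fderiv ℝ f) u₀).comp ((A (y - u₀)).symm : V →L[ℝ] V))) c := by
  have hgc : g y - c = e (y - u₀) := by rw [hg, add_sub_cancel_right]
  have hsymm : HasFDerivAt e.symm ((A (y - u₀)).symm : V →L[ℝ] V) (g y - c) := by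
    simpa [hgc] using hasFDerivAt_homeomorph_symm he (e (y - u₀))
  have hy : y - e.symm (g y - c) = u₀ := by simp [hgc]
  have hinner : HasFDerivAt (fun u => y - e.symm (g y - u)) ((A (y - u₀)).symm : V →L[ℝ] V) c :=
    ((hsymm.comp c ((hasFDerivAt_id c).const_sub _)).const_sub _).congr_fderiv (by ext; simp)
  have hleft : HasFDerivAt (fun u => fderiv ℝ f (y - e.symm (g y - u)))
      ((fderiv ℝ (fderiv ℝ f) u₀).comp ((A (y - u₀)).symm : V →L[ℝ] V)) c :=
    HasFDerivAt.comp c (by rw [hy]; exact hf2.hasFDerivAt) hinner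
  have hright : Continuous fun u => fderiv ℝ e.symm (g y - u) :=
    ((e.contDiff_symm he H.contDiff_right).continuous_fderiv one_ne_zero).comp
      (continuous_sub_left _)
  have hprod := (hasFDerivAt_bilinear_of_left_eq_zero (ContinuousLinearMap.compL ℝ V V ℝ) hleft
    (by rw [hy, hu₀]) hright.continuousAt).const_smul (m y)
  rw [hsymm.fderiv] at hprod
  exact hprod.congr_of_eventuallyEq (.of_forall (H.fderiv_eq_smul_comp y))

-- `m` is constant because `m y * f u₀ = ft c`.
theorem hessian_symm_apply_eq {e : V ≃ₜ V} (H : LikelihoodIdentity μ f ft m g e) {u₀ c : V}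
    (hg : ∀ y, g y = e (y - u₀) + c) (hu₀ : fderiv ℝ f u₀ = 0)
    (hf2 : DifferentiableAt ℝ (fderiv ℝ f) u₀) {A : V → V ≃L[ℝ] V}
    (he : ∀ w, HasFDerivAt e (A w : V →L[ℝ] V) w) (w w' v : V) :
    fderiv ℝ (fderiv ℝ f) u₀ ((A w).symm v) ((A w).symm v) =
      fderiv ℝ (fderiv ℝ f) u₀ ((A w').symm v) ((A w').symm v) := by
  have hm (x : V) : f u₀ * m (x + u₀) = ft c := by
    simpa [hg] using H.apply_sub_mul (x + u₀) x
  have hmw : m (w + u₀) = m (w' + u₀) := mul_left_cancel₀ (H.pos u₀).ne' ((hm w).trans (hm w').symm)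
  have huniq := (H.hasFDerivAt_fderiv hg hu₀ hf2 he (w + u₀)).unique
    (H.hasFDerivAt_fderiv hg hu₀ hf2 he (w' + u₀))
  rw [hmw] at huniq
  simpa [(H.scale_pos _).ne'] using congr($huniq v v)

theorem exists_affine (H : LikelihoodIdentity μ f ft m g h) {u₀ : V} (hu₀ : fderiv ℝ f u₀ = 0)
    (hf2 : ContDiffAt ℝ 2 f u₀) (hneg : ∀ v, v ≠ 0 → fderiv ℝ (fderiv ℝ f) u₀ v v < 0) :
    ∃ (L : V ≃L[ℝ] V) (b c : V), (∀ w, h w = L w + b) ∧ ∀ y, g y = L y + c := by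
  have hf2' : DifferentiableAt ℝ (fderiv ℝ f) u₀ :=
    (hf2.fderiv_right (m := 1) le_rfl).differentiableAt one_ne_zero
  obtain ⟨c, hg⟩ := H.exists_left_eq_right_add hu₀ (eventually_fderiv_ne_zero hf2' hneg)
  obtain ⟨e, rfl⟩ := H.exists_homeomorph_eq_right hg
  choose A hA using H.exists_hasFDerivAt_equiv
  obtain ⟨S, hS⟩ := exists_linearEquiv_norm_sq_eq
    (LinearMap.mk₂ ℝ (fun v w => -fderiv ℝ (fderiv ℝ f) u₀ v w) (by simp [add_comm]) (by simp)
      (by simp [add_comm]) (by simp))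
    (fun v w => by simpa using hf2.isSymmSndFDerivAt (by simp) v w)
    fun v hv => by simpa using hneg v hv
  have hnorm (x v : V) : ‖S ((A 0).symm (A x v))‖ = ‖S v‖ := by
    rw [← sq_eq_sq₀ (norm_nonneg _) (norm_nonneg _), hS, hS]
    simpa using H.hessian_symm_apply_eq hg hu₀ hf2' hA 0 x (A x v)
  obtain ⟨L, hL⟩ := exists_linear_of_norm_hasFDerivAt_eq e A hA S.toContinuousLinearEquiv
    ((A 0).symm.trans S.toContinuousLinearEquiv) hnorm
  exact ⟨L, e 0, e 0 - L u₀ + c, hL, fun y => by rw [hg, hL, map_sub]; abel⟩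

end LikelihoodIdentity

theorem integral_comp_continuousLinearEquiv {V F : Type*} [NormedAddCommGroup V] [NormedSpace ℝ V]
    [FiniteDimensional ℝ V] [MeasurableSpace V] [BorelSpace V] [NormedAddCommGroup F]
    [NormedSpace ℝ F] (μ : Measure V) [μ.IsAddHaarMeasure] (L : V ≃L[ℝ] V) (φ : V → F) :
    ∫ u, φ (L u) ∂μ = |(L : V →L[ℝ] V).det|⁻¹ • ∫ z, φ z ∂μ := by
  have hdet : LinearMap.det (L : V →ₗ[ℝ] V) ≠ 0 := L.toLinearEquiv.isUnit_det'.ne_zero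
  have hmap : μ.map L = ENNReal.ofReal |(L : V →L[ℝ] V).det|⁻¹ • μ := by
    rw [← abs_inv]
    exact Measure.map_linearMap_addHaar_eq_smul_addHaar μ hdet
  calc ∫ u, φ (L u) ∂μ = ∫ z, φ z ∂(μ.map L) :=
        (L.toHomeomorph.measurableEmbedding.integral_map φ).symm
    _ = |(L : V →L[ℝ] V).det|⁻¹ • ∫ z, φ z ∂μ := by
        rw [hmap, integral_smul_measure, ENNReal.toReal_ofReal (by positivity)]

theorem abs_det_fderiv_comp_linearIsometryEquiv {V : Type*} [NormedAddCommGroup V]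
    [InnerProductSpace ℝ V] [FiniteDimensional ℝ V] (U : V ≃ₗᵢ[ℝ] V) (f : V → V) (z : V) :
    |(fderiv ℝ (U ∘ f) z).det| = |(fderiv ℝ f z).det| := by
  have hU : |(U : V →L[ℝ] V).det| = 1 :=
    ((U : V →ₗ[ℝ] V).normDet_eq_abs_det).symm.trans U.toLinearIsometry.normDet_eq_one
  have hdet : (fderiv ℝ (U ∘ f) z).det = (U : V →L[ℝ] V).det * (fderiv ℝ f z).det := by
    rw [U.comp_fderiv]
    exact LinearMap.det_comp _ _
  rw [hdet, abs_mul, hU, one_mul]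

namespace AdmissibleDensity

variable {p : ℕ} {ρ ρt : E p → ℝ}

theorem continuous (hρ : AdmissibleDensity ρ) : Continuous ρ := hρ.1.continuous

theorem integrable (hρ : AdmissibleDensity ρ) : Integrable ρ :=
  .of_integral_ne_zero (hρ.2.2.1.trans_ne one_ne_zero)

theorem ne_zero (hρ : AdmissibleDensity ρ) : ρ ≠ 0 :=
  fun h0 => (hρ.2.1 0).ne' (congrFun h0 0)

theorem integrable_norm_sq_mul (hρ : AdmissibleDensity ρ) :
    Integrable fun u => ‖u‖ ^ 2 * ρ u := by
  simp only [EuclideanSpace.real_norm_sq_eq, Finset.sum_mul]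
  refine integrable_finsetSum _ fun i _ => Integrable.of_integral_ne_zero ?_
  simp [sq, hρ.2.2.2.2 i i]

theorem integrable_apply_mul_apply_mul (hρ : AdmissibleDensity ρ) (i j : Fin p) :
    Integrable fun u : E p => u i * u j * ρ u := by
  have := hρ.continuous
  refine hρ.integrable_norm_sq_mul.mono (by fun_prop) (.of_forall fun u => ?_)
  simp only [norm_mul, norm_norm, sq]
  gcongr <;> exact PiLp.norm_apply_le u _

theorem integrable_apply_mul (hρ : AdmissibleDensity ρ) (i : Fin p) :
    Integrable fun u : E p => u i * ρ u := by
  have := hρ.continuous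
  refine (hρ.integrable_norm_sq_mul.add hρ.integrable).mono' (by fun_prop) (.of_forall fun u => ?_)
  have hi : ‖u i‖ ≤ ‖u‖ ^ 2 + 1 :=
    (PiLp.norm_apply_le u i).trans (by nlinarith [sq_nonneg (‖u‖ - 1)])
  simpa [abs_of_pos (hρ.2.1 u), add_mul] using mul_le_mul_of_nonneg_right hi (hρ.2.1 u).le

theorem integrable_inner_mul (hρ : AdmissibleDensity ρ) (a : E p) :
    Integrable fun u => inner ℝ u a * ρ u := by
  simp only [PiLp.inner_apply, RCLike.inner_apply, conj_trivial, Finset.sum_mul, mul_assoc]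
  exact integrable_finsetSum _ fun i _ => (hρ.integrable_apply_mul i).const_mul _

theorem integral_inner_mul (hρ : AdmissibleDensity ρ) (a : E p) :
    ∫ u, inner ℝ u a * ρ u = 0 := by
  simp only [PiLp.inner_apply, RCLike.inner_apply, conj_trivial, Finset.sum_mul, mul_assoc]
  rw [integral_finsetSum _ fun i _ => (hρ.integrable_apply_mul i).const_mul _]
  simp [integral_const_mul, hρ.2.2.2.1]

theorem integral_inner_mul_inner_mul (hρ : AdmissibleDensity ρ) (a b : E p) :
    ∫ u, inner ℝ u a * inner ℝ u b * ρ u = inner ℝ a b := by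
  have hexpand (u : E p) :
      inner ℝ u a * inner ℝ u b * ρ u = ∑ i, ∑ j, a i * b j * (u i * u j * ρ u) := by
    simp only [PiLp.inner_apply, RCLike.inner_apply, conj_trivial]
    rw [Finset.sum_mul_sum, Finset.sum_mul]
    simp only [Finset.sum_mul]
    exact Finset.sum_congr rfl fun i _ => Finset.sum_congr rfl fun j _ => by ring
  have hint (i j : Fin p) : Integrable fun u : E p => a i * b j * (u i * u j * ρ u) :=
    (hρ.integrable_apply_mul_apply_mul i j).const_mul _
  simp only [hexpand]
  rw [integral_finsetSum _ fun i _ => integrable_finsetSum _ fun j _ => hint i j]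
  simp only [integral_finsetSum _ fun j _ => hint _ j, integral_const_mul, hρ.2.2.2.2]
  simp [PiLp.inner_apply, mul_comm]

-- Testing against the constant `1` gives `m * |det L| = 1`.
theorem integral_mul_eq_of_comp_affine (hρ : AdmissibleDensity ρ) (hρt : AdmissibleDensity ρt)
    {L : E p ≃L[ℝ] E p} {b : E p} {m : ℝ} (h : ∀ u, ρt (L u - b) = m * ρ u) (φ : E p → ℝ) :
    ∫ z, φ z * ρt z = ∫ u, φ (L u - b) * ρ u := by
  set d := |(L : E p →L[ℝ] E p).det|⁻¹
  have hcov (ψ : E p → ℝ) : m * ∫ u, ψ (L u - b) * ρ u = d * ∫ z, ψ z * ρt z := by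
    have := integral_comp_continuousLinearEquiv volume L fun z => ψ (z - b) * ρt (z - b)
    rw [integral_sub_right_eq_self fun z => ψ z * ρt z] at this
    rw [← integral_const_mul, ← smul_eq_mul, ← this]
    simp only [h, mul_left_comm]
  have hm : m = d := by simpa [hρ.2.2.1, hρt.2.2.1] using hcov fun _ => 1
  have hm0 : m ≠ 0 := fun h0 => (hρt.2.1 (L 0 - b)).ne' (by rw [h, h0, zero_mul])
  exact mul_left_cancel₀ hm0 ((hcov φ).trans (by rw [hm])).symm

theorem eq_zero_of_comp_affine (hρ : AdmissibleDensity ρ) (hρt : AdmissibleDensity ρt)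
    {L : E p ≃L[ℝ] E p} {b : E p} {m : ℝ} (h : ∀ u, ρt (L u - b) = m * ρ u) : b = 0 := by
  have hmean := integral_mul_eq_of_comp_affine hρ hρt h (inner ℝ · b)
  have hLb (u : E p) : inner ℝ (L u) b = inner ℝ u ((L : E p →L[ℝ] E p).adjoint b) :=
    ((L : E p →L[ℝ] E p).adjoint_inner_right u b).symm
  simp only [inner_sub_left, sub_mul, hLb] at hmean
  rw [hρt.integral_inner_mul, integral_sub (hρ.integrable_inner_mul _) (hρ.integrable.const_mul _),
    hρ.integral_inner_mul, integral_const_mul, hρ.2.2.1] at hmean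
  simpa using hmean

theorem norm_apply_eq_of_comp_linear (hρ : AdmissibleDensity ρ) (hρt : AdmissibleDensity ρt)
    {L : E p ≃L[ℝ] E p} {m : ℝ} (h : ∀ u, ρt (L u) = m * ρ u) (u : E p) : ‖L u‖ = ‖u‖ := by
  set T : E p →L[ℝ] E p := (L : E p →L[ℝ] E p).adjoint with hT
  have hLT (u a : E p) : inner ℝ (L u) a = inner ℝ u (T a) :=
    ((L : E p →L[ℝ] E p).adjoint_inner_right u a).symm
  have hnorm (a : E p) : ‖T a‖ = ‖a‖ := by
    have hcovariance := integral_mul_eq_of_comp_affine (b := 0) hρ hρt (by simpa using h)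
      fun z => inner ℝ z a * inner ℝ z a
    simp only [sub_zero, hLT, integral_inner_mul_inner_mul, hρ, hρt, real_inner_self_eq_norm_sq]
      at hcovariance
    exact ((sq_eq_sq₀ (norm_nonneg _) (norm_nonneg _)).1 hcovariance).symm
  have hinv : (L : E p →L[ℝ] E p).comp T = 1 := by
    simpa [hT] using T.norm_map_iff_adjoint_comp_self.1 hnorm
  have hTL : T (L u) = u := L.injective congr($hinv (L u))
  rw [← hnorm, hTL]

theorem comp_symm (hρ : AdmissibleDensity ρ) (U : E p ≃ₗᵢ[ℝ] E p) :
    AdmissibleDensity (ρ ∘ U.symm) := by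
  have hcov (φ : E p → ℝ) : ∫ z, φ z * ρ (U.symm z) = ∫ u, φ (U u) * ρ u := by
    simpa using (U.measurePreserving.integral_comp
      U.toHomeomorph.measurableEmbedding fun z => φ z * ρ (U.symm z)).symm
  have hcoord (u : E p) (i : Fin p) :
      U u i = inner ℝ u (U.symm (EuclideanSpace.single i 1)) := by
    rw [← U.inner_map_map, U.apply_symm_apply]
    simp [EuclideanSpace.inner_single_right]
  refine ⟨hρ.1.comp U.symm.contDiff, fun u => hρ.2.1 _, ?_, fun i => ?_, fun i j => ?_⟩
  · simpa using (hcov fun _ => 1).trans (by simpa using hρ.2.2.1)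
  · exact (hcov (· i)).trans (by simpa only [hcoord] using hρ.integral_inner_mul _)
  · refine (hcov fun z => z i * z j).trans ?_
    simp only [hcoord, hρ.integral_inner_mul_inner_mul, U.symm.inner_map_map]
    simp [EuclideanSpace.inner_single_right, eq_comm]

end AdmissibleDensity

theorem eq_of_ae_prod_eq_comp_fst {Y X F : Type*} [TopologicalSpace Y] [MeasurableSpace Y]
    [TopologicalSpace X] [MeasurableSpace X] [TopologicalSpace F] [T2Space F] {μ : Measure Y}
    [SFinite μ] [μ.IsOpenPosMeasure] {ν : Measure X} [SFinite ν] [ν.IsOpenPosMeasure]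
    {R : Y × X → F} {r : Y → F} (hR : Continuous R) (h : ∀ᵐ w ∂μ.prod ν, R w = r w.1) (y : Y)
    (x x' : X) : R (y, x) = R (y, x') := by
  have : Nonempty X := ⟨x⟩
  have hslice : ∀ᵐ x ∂ν, ∀ᵐ y ∂μ, R (y, x) = r y :=
    Measure.ae_ae_of_ae_prod (Measure.measurePreserving_swap.quasiMeasurePreserving.ae h)
  obtain ⟨x₀, hx₀⟩ := hslice.exists
  have hx₀' : ∀ᵐ w ∂μ.prod ν, R (w.1, x₀) = r w.1 := Measure.quasiMeasurePreserving_fst.ae hx₀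
  have hconst : R = fun w => R (w.1, x₀) :=
    (hR.ae_eq_iff_eq (μ.prod ν) (by fun_prop)).1 <| by
      filter_upwards [h, hx₀'] with w hw hw₀ using hw.trans hw₀.symm
  rw [congrFun hconst (y, x), congrFun hconst (y, x')]

theorem exists_orthogonal_matrix_iff {p : ℕ} (P : (E p → E p) → Prop) :
    (∃ Q : Matrix (Fin p) (Fin p) ℝ, Q * Qᵀ = 1 ∧ P (mulVecE Q)) ↔
      ∃ U : E p ≃ₗᵢ[ℝ] E p, P U := by
  constructor
  · rintro ⟨Q, hQ, hP⟩
    have hmem : toEuclideanCLM (𝕜 := ℝ) Q ∈ unitary (E p →L[ℝ] E p) :=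
      Unitary.map_mem toEuclideanCLM ((mem_orthogonalGroup_iff _ _).2 hQ)
    exact ⟨Unitary.linearIsometryEquiv ⟨_, hmem⟩, hP⟩
  · rintro ⟨U, hP⟩
    obtain ⟨Q, hQ⟩ :=
      EquivLike.surjective (toEuclideanCLM (n := Fin p) (𝕜 := ℝ)) (U : E p →L[ℝ] E p)
    refine ⟨Q, EquivLike.injective (toEuclideanCLM (n := Fin p) (𝕜 := ℝ)) ?_, ?_⟩
    · rw [← conjTranspose_eq_transpose_of_trivial, ← star_eq_conjTranspose, map_mul, map_star,
        map_one, hQ]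
      exact Unitary.mul_star_self_of_mem (Unitary.linearIsometryEquiv.symm U).2
    · have hQU : mulVecE Q = U := funext fun u => congr($hQ u)
      rwa [hQU]

theorem LocalMaxCondition.exists_fderiv_eq_zero {p : ℕ} {ρ : E p → ℝ} (hρ : LocalMaxCondition ρ) :
    ∃ u₀, fderiv ℝ ρ u₀ = 0 ∧ ContDiffAt ℝ 2 ρ u₀ ∧
      ∀ v, v ≠ 0 → fderiv ℝ (fderiv ℝ ρ) u₀ v v < 0 := by
  obtain ⟨u₀, hmax, hdiff, hneg⟩ := hρ
  exact ⟨u₀, hmax.fderiv_eq_zero, hdiff, fun v hv => by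
    simpa [iteratedFDeriv_two_apply] using hneg v hv⟩

theorem LikelihoodIdentity.exists_linearIsometryEquiv {p : ℕ} {ρ ρt m : E p → ℝ}
    {g h : E p → E p} (H : LikelihoodIdentity volume ρ ρt m g h) (hρ : AdmissibleDensity ρ)
    (hρt : AdmissibleDensity ρt) (hmax : LocalMaxCondition ρ) (hg0 : g 0 = 0) :
    ∃ U : E p ≃ₗᵢ[ℝ] E p, (∀ y, g y = U y) ∧ ∀ w, h w = U w := by
  obtain ⟨u₀, hu₀, hdiff, hneg⟩ := hmax.exists_fderiv_eq_zero
  obtain ⟨L, b, c, hh, hg⟩ := H.exists_affine hu₀ hdiff hneg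
  obtain rfl : c = 0 := by simpa [hg0] using (hg 0).symm
  have haffine (u : E p) : ρt (L u - b) = m 0 * ρ u := by
    simpa [hg0, hh, mul_comm, ← sub_eq_add_neg, sub_eq_neg_add] using (H.apply_sub_mul 0 (-u)).symm
  obtain rfl : b = 0 := hρ.eq_zero_of_comp_affine hρt haffine
  have hnorm := hρ.norm_apply_eq_of_comp_linear hρt (L := L) (by simpa using haffine)
  exact ⟨⟨L.toLinearEquiv, hnorm⟩, by simpa using hg, by simpa using hh⟩

section Model

variable {p : ℕ} {X : Type*} [TopologicalSpace X] [MeasurableSpace X] {μ : Measure X} [SFinite μ]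
  [μ.IsOpenPosMeasure] {f₀ ft₀ : E p → E p} {f₁ ft₁ : X → E p} {ρ ρt : E p → ℝ}

-- The likelihood ratio is continuous and a.e. equal to a ratio of Jacobians, a function of `z`.
theorem exists_scale_of_ae_likelihood_eq (hρ : AdmissibleDensity ρ) (hρt : AdmissibleDensity ρt)
    (hf₀ : Continuous f₀) (hf₀det : ∀ᵐ z, (fderiv ℝ f₀ z).det ≠ 0) (hf₁ : Continuous f₁)
    (hft₀ : Continuous ft₀) (hft₁ : Continuous ft₁)
    (h : ∀ᵐ w ∂(volume : Measure (E p)).prod μ,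
      ρ (f₀ w.1 - f₁ w.2) * |(fderiv ℝ f₀ w.1).det| =
        ρt (ft₀ w.1 - ft₁ w.2) * |(fderiv ℝ ft₀ w.1).det|) :
    ∃ m : E p → ℝ, ∀ z x, ρ (f₀ z - f₁ x) * m z = ρt (ft₀ z - ft₁ x) := by
  have hpos (u : E p) : ρ u ≠ 0 := (hρ.2.1 u).ne'
  obtain hX | ⟨⟨x₀⟩⟩ := isEmpty_or_nonempty X
  · exact ⟨0, fun _ x => hX.elim x⟩
  let R (w : E p × X) : ℝ := ρt (ft₀ w.1 - ft₁ w.2) / ρ (f₀ w.1 - f₁ w.2)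
  let r (z : E p) : ℝ := |(fderiv ℝ f₀ z).det| / |(fderiv ℝ ft₀ z).det|
  have hR : Continuous R := by
    have := hρ.continuous
    have := hρt.continuous
    exact .div (by fun_prop) (by fun_prop) fun _ => hpos _
  have hdet : ∀ᵐ w ∂(volume : Measure (E p)).prod μ, (fderiv ℝ f₀ w.1).det ≠ 0 :=
    Measure.quasiMeasurePreserving_fst.ae hf₀det
  have hRr : ∀ᵐ w ∂(volume : Measure (E p)).prod μ, R w = r w.1 := by
    filter_upwards [h, hdet] with w hw hdw
    have hdtw : |(fderiv ℝ ft₀ w.1).det| ≠ 0 := fun h0 =>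
      mul_ne_zero (hpos _) (abs_ne_zero.2 hdw) (hw.trans (by rw [h0, mul_zero]))
    simp only [R, r]
    rw [div_eq_div_iff (hpos _) hdtw, ← hw, mul_comm]
  refine ⟨fun z => R (z, x₀), fun z x => ?_⟩
  beta_reduce
  rw [← eq_of_ae_prod_eq_comp_fst hR hRr z x x₀, mul_div_cancel₀ _ (hpos _)]

theorem exists_linearIsometryEquiv_of_ae_likelihood_eq (hρ : AdmissibleDensity ρ)
    (hmax : LocalMaxCondition ρ) (hρt : AdmissibleDensity ρt) (hf₀ : IsHomeomorph f₀)
    (hf₀0 : f₀ 0 = 0) (hf₀det : ∀ᵐ z, (fderiv ℝ f₀ z).det ≠ 0) (hf₁ : Continuous f₁)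
    (hf₁surj : Function.Surjective f₁) (hft₀ : Continuous ft₀)
    (hft₀surj : Function.Surjective ft₀) (hft₀0 : ft₀ 0 = 0) (hft₁ : Continuous ft₁)
    (h : ∀ᵐ w ∂(volume : Measure (E p)).prod μ,
      ρ (f₀ w.1 - f₁ w.2) * |(fderiv ℝ f₀ w.1).det| =
        ρt (ft₀ w.1 - ft₁ w.2) * |(fderiv ℝ ft₀ w.1).det|) :
    ∃ U : E p ≃ₗᵢ[ℝ] E p, (∀ z, ft₀ z = U (f₀ z)) ∧ ∀ x, ft₁ x = U (f₁ x) := by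
  obtain ⟨m, hm⟩ :=
    exists_scale_of_ae_likelihood_eq hρ hρt hf₀.continuous hf₀det hf₁ hft₀ hft₁ h
  choose s hs using hf₁surj
  let e : E p ≃ₜ E p := hf₀.homeomorph
  have he (z : E p) : e.symm (f₀ z) = z := e.symm_apply_apply z
  have H : LikelihoodIdentity volume ρ ρt (m ∘ e.symm) (ft₀ ∘ e.symm) (ft₁ ∘ s) :=
    { contDiff := hρ.1
      contDiff' := hρt.1
      integrable := hρ.integrable
      integrable' := hρt.integrable
      pos := hρ.2.1
      pos' := hρt.2.1
      continuous_left := hft₀.comp e.symm.continuous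
      surjective_left := hft₀surj.comp e.symm.surjective
      apply_sub_mul := fun y w => by
        have hy : f₀ (e.symm y) = y := e.apply_symm_apply y
        simpa only [hy, hs, Function.comp_apply] using hm (e.symm y) (s w) }
  have hg0 : (ft₀ ∘ e.symm) 0 = 0 := by
    simpa [hf₀0, hft₀0] using congrArg ft₀ (he 0)
  obtain ⟨U, hg, hh⟩ := H.exists_linearIsometryEquiv hρ hρt hmax hg0
  have hs' (x : X) : ft₁ x = ft₁ (s (f₁ x)) :=
    eq_of_forall_translate_eq hρt.continuous hρt.integrable hρt.ne_zero <| hft₀surj.forall.2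
      fun z => by rw [← hm, ← hm, hs]
  exact ⟨U, fun z => by simpa [he] using hg (f₀ z), fun x => (hs' x).trans (hh (f₁ x))⟩

end Model

theorem nonlinear_svar_identification_general {p : ℕ} {X : Type*} [TopologicalSpace X]
    [MeasurableSpace X] (μ : Measure X) [SFinite μ] [μ.IsOpenPosMeasure] {f₀ : E p → E p}
    (hf₀ : IsHomeomorph f₀) (hf₀0 : f₀ 0 = 0) (hf₀det : ∀ᵐ z, (fderiv ℝ f₀ z).det ≠ 0)
    {f₁ : X → E p} (hf₁ : Continuous f₁) (hf₁surj : Function.Surjective f₁) {ρ : E p → ℝ}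
    (hρ : AdmissibleDensity ρ) (hρmax : LocalMaxCondition ρ) {ft₀ : E p → E p}
    (hft₀ : Continuous ft₀) (hft₀surj : Function.Surjective ft₀) (hft₀0 : ft₀ 0 = 0)
    {ft₁ : X → E p} (hft₁ : Continuous ft₁) :
    (∃ ρt : E p → ℝ, AdmissibleDensity ρt ∧
        ∀ᵐ w ∂(volume : Measure (E p)).prod μ,
          ρ (f₀ w.1 - f₁ w.2) * |(fderiv ℝ f₀ w.1).det|
            = ρt (ft₀ w.1 - ft₁ w.2) * |(fderiv ℝ ft₀ w.1).det|)
      ↔ ∃ Q : Matrix (Fin p) (Fin p) ℝ, Q * Qᵀ = 1 ∧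
          (∀ z, ft₀ z = mulVecE Q (f₀ z)) ∧ ∀ x, ft₁ x = mulVecE Q (f₁ x) := by
  rw [exists_orthogonal_matrix_iff fun T => (∀ z, ft₀ z = T (f₀ z)) ∧ ∀ x, ft₁ x = T (f₁ x)]
  constructor
  · rintro ⟨ρt, hρt, h⟩
    exact exists_linearIsometryEquiv_of_ae_likelihood_eq hρ hρmax hρt hf₀ hf₀0 hf₀det hf₁ hf₁surj
      hft₀ hft₀surj hft₀0 hft₁ h
  · rintro ⟨U, h₀, h₁⟩
    obtain rfl : ft₀ = U ∘ f₀ := funext h₀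
    refine ⟨ρ ∘ U.symm, hρ.comp_symm U, .of_forall fun w => ?_⟩
    rw [h₁, abs_det_fderiv_comp_linearIsometryEquiv, Function.comp_apply, Function.comp_apply,
      ← map_sub, U.symm_apply_apply]

/-- **Identification of the (endogenously) nonlinear SVAR** (Theorem `thm:shockid`):
a candidate parametrisation `(f̃₀, f̃₁)` is observationally equivalent to `(f₀, f̄₁, ρ)` for
some admissible density `ρ̃` if and only if it is an orthogonal transformation of `(f₀, f̄₁)`. -/
theorem nonlinear_svar_identification
    (p k : ℕ) (hp : 1 ≤ p) (hk : 1 ≤ k)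
    (f₀ : E p → E p) (hf₀lip : LocallyLipschitz f₀) (hf₀bij : Function.Bijective f₀)
    (hf₀0 : f₀ 0 = 0) (hf₀inv : LocallyLipschitz (Function.invFun f₀))
    (hf₀det : ∀ᵐ z : E p, DifferentiableAt ℝ f₀ z ∧ (fderiv ℝ f₀ z).det ≠ 0)
    (f₁ : E (k * p) → E p) (hf₁lip : LocallyLipschitz f₁) (hf₁surj : Function.Surjective f₁)
    (hf₁rank : ∀ᵐ z : E (k * p), DifferentiableAt ℝ f₁ z ∧
      LinearMap.rank (fderiv ℝ f₁ z).toLinearMap = (p : Cardinal))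
    (ρ : E p → ℝ) (hρ : AdmissibleDensity ρ) (hρmax : LocalMaxCondition ρ)
    (ft₀ : E p → E p) (hft₀lip : LocallyLipschitz ft₀) (hft₀bij : Function.Bijective ft₀)
    (hft₀0 : ft₀ 0 = 0)
    (hft₀det : ∀ᵐ z : E p, DifferentiableAt ℝ ft₀ z ∧ (fderiv ℝ ft₀ z).det ≠ 0)
    (ft₁ : E (k * p) → E p) (hft₁lip : LocallyLipschitz ft₁) :
    (∃ ρt : E p → ℝ, AdmissibleDensity ρt ∧
        ∀ᵐ w : E p × E (k * p),
          ρ (f₀ w.1 - f₁ w.2) * |(fderiv ℝ f₀ w.1).det|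
            = ρt (ft₀ w.1 - ft₁ w.2) * |(fderiv ℝ ft₀ w.1).det|)
      ↔ ∃ Q : Matrix (Fin p) (Fin p) ℝ, Q * Qᵀ = 1 ∧
          (∀ z : E p, ft₀ z = mulVecE Q (f₀ z)) ∧
          (∀ z : E (k * p), ft₁ z = mulVecE Q (f₁ z)) :=
  nonlinear_svar_identification_general volume
    (isHomeomorph_iff_exists_inverse.2 ⟨hf₀lip.continuous, Function.invFun f₀,
      Function.leftInverse_invFun hf₀bij.1, Function.rightInverse_invFun hf₀bij.2,
      hf₀inv.continuous⟩)
    hf₀0 (hf₀det.mono fun _ h => h.2) hf₁lip.continuous hf₁surj hρ hρmax hft₀lip.continuous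
    hft₀bij.2 hft₀0 hft₁lip.continuous
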